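/- arXiv:1305.1966 — 2 statements merged into one kernel-verified Lean document; each statement's English description precedes it below -/
import Mathlib

section
/- (Picard's integral representation) Let a, b, b', c be complex numbers with Re(c) > Re(a) > 0 and c not a nonpositive integer, and let x, y be real numbers with |x| < 1 and |y| < 1. Then ∫₀¹ u^{a−1} (1−u)^{c−a−1} (1−ux)^{−b} (1−uy)^{−b'} du = (Γ(a)Γ(c−a)/Γ(c)) · F₁(a; b, b'; c; x, y). -/
noncomputable def poch (a : ℂ) (n : ℕ) : ℂ := ∏ i ∈ Finset.range n, (a + i)

/-- Appell series F₁(a;b,b';c;x,y). -/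
noncomputable def appellF1 (a b b' c x y : ℂ) : ℂ :=
  ∑' p : ℕ × ℕ, poch a (p.1 + p.2) * poch b p.1 * poch b' p.2 /
    (p.1.factorial * p.2.factorial * poch c (p.1 + p.2)) * x ^ p.1 * y ^ p.2

theorem poch_succ (a : ℂ) (n : ℕ) : poch a (n + 1) = poch a n * (a + n) := by
  simp [poch, Finset.prod_range_succ]

theorem poch_eq_eval (a : ℂ) (n : ℕ) : poch a n = (ascPochhammer ℂ n).eval a := by
  induction n with
  | zero => simp [poch]
  | succ n ih => rw [poch_succ, ih, ascPochhammer_succ_eval]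

theorem Gamma_add_poch (a : ℂ) (h : ∀ n : ℕ, a ≠ -(n : ℂ)) (n : ℕ) :
    Complex.Gamma (a + n) = poch a n * Complex.Gamma a := by
  induction n with
  | zero => simp [poch]
  | succ n ih =>
    have : a + n ≠ 0 := fun h0 => h n (eq_neg_of_add_eq_zero_left h0)
    rw [poch_succ, Nat.cast_add, Nat.cast_one, ← add_assoc, Complex.Gamma_add_one _ this, ih]
    ring

theorem hasSum_binom (b z : ℂ) (hz : ‖z‖ < 1) :
    HasSum (fun n : ℕ => poch b n / n.factorial * z ^ n) ((1 - z) ^ (-b)) := by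
  have h := (Complex.one_div_one_sub_cpow_hasFPowerSeriesOnBall_zero b).hasSum
    (y := z) (by
      rw [← ENNReal.ofReal_one, Metric.eball_ofReal]
      simpa using hz)
  simp only [zero_add, FormalMultilinearSeries.ofScalars_apply_eq, smul_eq_mul] at h
  rw [one_div, ← Complex.cpow_neg] at h
  refine (congrArg (fun f => HasSum f ((1 - z) ^ (-b))) ?_).mpr h
  funext n
  have h1 := Ring.factorial_nsmul_multichoose_eq_ascPochhammer b n
  rw [Polynomial.ascPochhammer_smeval_eq_eval, ← poch_eq_eval, nsmul_eq_mul] at h1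
  have h2 : Ring.choose (b + n - 1) n = Ring.multichoose b n := by
    rw [Ring.choose]; congr 1; ring
  rw [h2, ← h1]
  field_simp [Nat.factorial_ne_zero]

theorem hasSum_mul_aux (w : ℂ) (f g : ℕ → ℂ) (S T : ℂ) (hf : HasSum f S) (hg : HasSum g T) :
    HasSum (fun p : ℕ × ℕ => w * (f p.1 * g p.2)) (w * (S * T)) := by
  have hn1 : Summable fun n => ‖f n‖ := hf.summable.norm
  have hn2 : Summable fun n => ‖g n‖ := hg.summable.norm
  have hs : Summable fun p : ℕ × ℕ => f p.1 * g p.2 := summable_mul_of_summable_norm hn1 hn2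
  have hm : HasSum (fun p : ℕ × ℕ => f p.1 * g p.2) (S * T) := HasSum.mul hf hg hs
  exact hm.mul_left w

theorem hasSum_core (b b' z z' w : ℂ) (hz : ‖z‖ < 1) (hz' : ‖z'‖ < 1) :
    HasSum (fun p : ℕ × ℕ => w * ((poch b p.1 / p.1.factorial * z ^ p.1) *
      (poch b' p.2 / p.2.factorial * z' ^ p.2))) (w * (1 - z) ^ (-b) * (1 - z') ^ (-b')) := by
  have s1 := hasSum_binom b z hz
  have s2 := hasSum_binom b' z' hz'
  rw [mul_assoc]
  have s3 := hasSum_mul_aux w _ _ _ _ s1 s2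
  exact s3

set_option maxHeartbeats 1000000 in
theorem picard_integral_appellF1 (a b b' c : ℂ) (x y : ℝ)
    (ha : 0 < a.re) (hac : a.re < c.re) (hc : ∀ n : ℕ, c ≠ -(n : ℂ))
    (hx : |x| < 1) (hy : |y| < 1) :
    ∫ u in (0:ℝ)..1, (u : ℂ) ^ (a - 1) * ((1 : ℂ) - u) ^ (c - a - 1) *
        ((1 : ℂ) - u * x) ^ (-b) * ((1 : ℂ) - u * y) ^ (-b') =
      Complex.Gamma a * Complex.Gamma (c - a) / Complex.Gamma c *
        appellF1 a b b' c x y := by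
  have hca : 0 < (c - a).re := by simpa using hac
  have ha' : ∀ n : ℕ, a ≠ -(n : ℂ) := by
    intro n h
    have : a.re = -(n : ℝ) := by simpa using congrArg Complex.re h
    have : (0 : ℝ) ≤ n := n.cast_nonneg
    linarith
  set A : ℕ → ℂ := fun n => poch b n / n.factorial with hA
  set B : ℕ → ℂ := fun n => poch b' n / n.factorial with hB
  set w : ℝ → ℂ := fun u => (u : ℂ) ^ (a - 1) * ((1 : ℂ) - u) ^ (c - a - 1) with hw
  have hwi : IntervalIntegrable w MeasureTheory.volume 0 1 :=
    Complex.betaIntegral_convergent ha hca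
  have hsx : Summable fun n => ‖A n * (x : ℂ) ^ n‖ :=
    (hasSum_binom b x (by simpa using hx)).summable.norm
  have hsy : Summable fun n => ‖B n * (y : ℂ) ^ n‖ :=
    (hasSum_binom b' y (by simpa using hy)).summable.norm
  have hsxy : Summable fun p : ℕ × ℕ => ‖A p.1 * (x : ℂ) ^ p.1‖ * ‖B p.2 * (y : ℂ) ^ p.2‖ :=
    hsx.mul_of_nonneg hsy (fun _ => norm_nonneg _) (fun _ => norm_nonneg _)
  have key := intervalIntegral.hasSum_integral_of_dominated_convergence
    (μ := MeasureTheory.volume) (a := 0) (b := 1)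
    (F := fun (p : ℕ × ℕ) (u : ℝ) => w u * ((A p.1 * (u * x : ℂ) ^ p.1) * (B p.2 * (u * y : ℂ) ^ p.2)))
    (f := fun u : ℝ => (u : ℂ) ^ (a - 1) * ((1 : ℂ) - u) ^ (c - a - 1) *
        ((1 : ℂ) - u * x) ^ (-b) * ((1 : ℂ) - u * y) ^ (-b'))
    (fun p u => ‖w u‖ * (‖A p.1 * (x : ℂ) ^ p.1‖ * ‖B p.2 * (y : ℂ) ^ p.2‖))
    ?_ ?_ ?_ ?_ ?_
  · rw [← key.tsum_eq, appellF1, ← tsum_mul_left]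
    congr 1
    ext p
    have hN : 0 < (a + ((p.1 + p.2 : ℕ) : ℂ)).re := by
      simp only [Complex.add_re, Complex.natCast_re]; positivity
    have hbeta := Complex.Gamma_mul_Gamma_eq_betaIntegral hN hca
    rw [show a + ((p.1 + p.2 : ℕ) : ℂ) + (c - a) = c + ((p.1 + p.2 : ℕ) : ℂ) by ring,
      Gamma_add_poch a ha', Gamma_add_poch c hc] at hbeta
    have hG : Complex.Gamma c ≠ 0 := Complex.Gamma_ne_zero hc
    have hP : poch c (p.1 + p.2) ≠ 0 := by
      rw [poch, Finset.prod_ne_zero_iff]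
      intro i _ h0
      exact hc i (eq_neg_of_add_eq_zero_left h0)
    have hint : ∫ u in (0:ℝ)..1, w u * ((A p.1 * (u * x : ℂ) ^ p.1) * (B p.2 * (u * y : ℂ) ^ p.2))
        = (A p.1 * x ^ p.1 * (B p.2 * y ^ p.2)) *
          Complex.betaIntegral (a + ((p.1 + p.2 : ℕ) : ℂ)) (c - a) := by
      rw [Complex.betaIntegral, ← intervalIntegral.integral_const_mul]
      apply intervalIntegral.integral_congr_ae
      refine Filter.Eventually.of_forall fun u hu => ?_
      rw [Set.uIoc_of_le zero_le_one] at hu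
      have hu0 : (u : ℂ) ≠ 0 := by exact_mod_cast hu.1.ne'
      rw [show a + ((p.1 + p.2 : ℕ) : ℂ) - 1 = (a - 1) + ((p.1 + p.2 : ℕ) : ℂ) by ring,
        Complex.cpow_add _ _ hu0, Complex.cpow_natCast]
      simp only [hw]
      ring
    rw [hint]
    have hb2 : Complex.betaIntegral (a + ((p.1 + p.2 : ℕ) : ℂ)) (c - a) =
        poch a (p.1 + p.2) * Complex.Gamma a * Complex.Gamma (c - a) /
          (poch c (p.1 + p.2) * Complex.Gamma c) := by
      rw [hbeta]; field_simp
    rw [hb2]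
    simp only [hA, hB]
    ring
  · intro p
    have h1 := (intervalIntegrable_iff.mp hwi).aestronglyMeasurable
    refine h1.mul (Continuous.aestronglyMeasurable ?_)
    fun_prop
  · intro p
    refine Filter.Eventually.of_forall fun u hu => ?_
    rw [Set.uIoc_of_le zero_le_one] at hu
    have hun : ∀ n : ℕ, |u| ^ n ≤ 1 := fun n =>
      pow_le_one₀ (abs_nonneg _) (by rw [abs_of_pos hu.1]; exact hu.2)
    simp only [norm_mul, norm_pow, Complex.norm_real, Real.norm_eq_abs, mul_pow]
    have e : ∀ (n : ℕ) (t : ℝ), |u| ^ n * |t| ^ n ≤ |t| ^ n := fun n t =>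
      mul_le_of_le_one_left (by positivity) (hun n)
    gcongr <;> apply e
  · exact Filter.Eventually.of_forall fun u _ => hsxy.mul_left _
  · simp only [tsum_mul_left]
    exact hwi.norm.mul_const _
  · refine Filter.Eventually.of_forall fun u hu => ?_
    rw [Set.uIoc_of_le zero_le_one] at hu
    have hlt : ∀ t : ℝ, |t| < 1 → ‖(u * t : ℂ)‖ < 1 := by
      intro t ht
      rw [norm_mul, Complex.norm_real, Complex.norm_real, Real.norm_eq_abs, Real.norm_eq_abs,
        abs_of_pos hu.1]
      exact (mul_le_of_le_one_left (abs_nonneg _) hu.2).trans_lt ht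
    exact hasSum_core b b' _ _ (w u) (hlt x hx) (hlt y hy)
end

section
/- Let a, b, b', c, c' be complex numbers with Re(c) > Re(b) > 0 and Re(c') > Re(b') > 0, with c and c' not nonpositive integers, and let x, y be real numbers with |x| + |y| < 1. Then ∫₀¹∫₀¹ u^{b−1} v^{b'−1} (1−u)^{c−b−1} (1−v)^{c'−b'−1} (1−ux−vy)^{−a} du dv = (Γ(b)Γ(b')Γ(c−b)Γ(c'−b')/(Γ(c)Γ(c'))) · F₂(a; b, b'; c, c'; x, y). -/
/-- Appell series F₂(a;b,b';c,c';x,y). -/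
noncomputable def appellF2 (a b b' c c' x y : ℂ) : ℂ :=
  ∑' p : ℕ × ℕ, poch a (p.1 + p.2) * poch b p.1 * poch b' p.2 /
    (p.1.factorial * p.2.factorial * poch c p.1 * poch c' p.2) * x ^ p.1 * y ^ p.2

open MeasureTheory Finset

lemma coefF2_eq (a : ℂ) (n : ℕ) : Ring.choose (a + n - 1) n = poch a n / n.factorial := by
  rw [← Ring.multichoose_eq, eq_div_iff (by exact_mod_cast n.factorial_ne_zero), mul_comm,
    ← nsmul_eq_mul, Ring.factorial_nsmul_multichoose_eq_ascPochhammer,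
    Polynomial.ascPochhammer_smeval_eq_eval]
  induction n with
  | zero => simp [poch]
  | succ n ih => rw [ascPochhammer_succ_right]; simp [poch, Finset.prod_range_succ, ih]

lemma binom_hasSum (a z : ℂ) (hz : ‖z‖ < 1) :
    HasSum (fun n : ℕ => poch a n / n.factorial * z ^ n) ((1 - z) ^ (-a)) := by
  have h := (Complex.one_div_one_sub_cpow_hasFPowerSeriesOnBall_zero a).hasSum (y := z)
    (by simpa [← NNReal.coe_lt_coe, enorm] using hz)
  simpa [FormalMultilinearSeries.ofScalars, coefF2_eq, Complex.cpow_neg, mul_comm] using h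

lemma binom_summable (a : ℂ) (r : ℝ) (h0 : 0 ≤ r) (hr : r < 1) :
    Summable (fun n : ℕ => ‖poch a n / n.factorial‖ * r ^ n) := by
  have := (binom_hasSum a r (by simpa [abs_of_nonneg h0] using hr)).summable.norm
  simpa [abs_of_nonneg h0] using this

lemma anti_sum (a s t : ℂ) (n : ℕ) :
    ∑ p ∈ antidiagonal n, poch a (p.1 + p.2) / (p.1.factorial * p.2.factorial) * s ^ p.1 * t ^ p.2
      = poch a n / n.factorial * (s + t) ^ n := by
  rw [Finset.Nat.sum_antidiagonal_eq_sum_range_succ_mk, add_pow, Finset.mul_sum]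
  refine Finset.sum_congr rfl fun k hk => ?_
  have hk' : k ≤ n := by simpa [Nat.lt_succ_iff] using hk
  simp only [Nat.add_sub_cancel' hk']
  rw [Nat.cast_choose ℂ hk']
  have := n.factorial_ne_zero
  have : (n.factorial : ℂ) ≠ 0 := by exact_mod_cast this
  field_simp

lemma anti_sum_norm (a s t : ℂ) (n : ℕ) :
    ∑ p ∈ antidiagonal n,
      ‖poch a (p.1 + p.2) / (p.1.factorial * p.2.factorial) * s ^ p.1 * t ^ p.2‖
      = ‖poch a n / n.factorial‖ * (‖s‖ + ‖t‖) ^ n := by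
  rw [Finset.Nat.sum_antidiagonal_eq_sum_range_succ_mk, add_pow, Finset.mul_sum]
  refine Finset.sum_congr rfl fun k hk => ?_
  have hk' : k ≤ n := by simpa [Nat.lt_succ_iff] using hk
  simp only [Nat.add_sub_cancel' hk']
  rw [Nat.cast_choose ℝ hk']
  have := n.factorial_ne_zero
  have : (n.factorial : ℝ) ≠ 0 := by exact_mod_cast this
  simp
  field_simp

lemma two_summable (a s t : ℂ) (h : ‖s‖ + ‖t‖ < 1) : Summable (fun p : ℕ × ℕ =>
    ‖poch a (p.1 + p.2) / (p.1.factorial * p.2.factorial) * s ^ p.1 * t ^ p.2‖) := by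
  rw [← Finset.HasAntidiagonal.sigmaAntidiagonalEquivProd.summable_iff]
  refine (summable_sigma_of_nonneg (fun _ => norm_nonneg _)).2 ?_
  refine ⟨fun n => (hasSum_fintype _).summable, ?_⟩
  refine (binom_summable a _ (by positivity) h).congr fun n => ?_
  rw [← anti_sum_norm, tsum_fintype]
  symm
  exact Finset.sum_coe_sort (antidiagonal n) (fun p : ℕ × ℕ =>
    ‖poch a (p.1 + p.2) / (p.1.factorial * p.2.factorial) * s ^ p.1 * t ^ p.2‖)

lemma two_tsum (a s t : ℂ) (h : ‖s‖ + ‖t‖ < 1) :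
    (1 - s - t) ^ (-a) = ∑' p : ℕ × ℕ,
    poch a (p.1 + p.2) / (p.1.factorial * p.2.factorial) * s ^ p.1 * t ^ p.2 := by
  have hs := (two_summable a s t h).of_norm
  rw [← Finset.HasAntidiagonal.sigmaAntidiagonalEquivProd.tsum_eq]
  refine Eq.trans ?_
    ((Finset.HasAntidiagonal.sigmaAntidiagonalEquivProd.summable_iff.2 hs).tsum_sigma'
      (fun n => (hasSum_fintype _).summable)).symm
  rw [sub_sub,
    ← (binom_hasSum a (s + t) ((norm_add_le _ _).trans_lt h)).tsum_eq]
  refine tsum_congr fun n => ?_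
  rw [← anti_sum, tsum_fintype]
  symm
  exact Finset.sum_coe_sort (antidiagonal n) (fun p : ℕ × ℕ =>
    poch a (p.1 + p.2) / (p.1.factorial * p.2.factorial) * s ^ p.1 * t ^ p.2)

lemma mom_int (w : ℝ → ℂ) (hw : IntervalIntegrable w volume 0 1) (n : ℕ) :
    IntervalIntegrable (fun u : ℝ => w u * (u : ℂ) ^ n) volume 0 1 :=
  hw.mul_continuousOn (by fun_prop)

lemma mom_norm (w : ℝ → ℂ) (hw : IntervalIntegrable w volume 0 1) (n : ℕ) :
    ∫ u in (0:ℝ)..1, ‖w u * (u : ℂ) ^ n‖ ≤ ∫ u in (0:ℝ)..1, ‖w u‖ := by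
  refine intervalIntegral.integral_mono_on zero_le_one (mom_int w hw n).norm hw.norm ?_
  intro u hu
  rw [norm_mul, norm_pow, Complex.norm_real, Real.norm_of_nonneg hu.1]
  exact mul_le_of_le_one_right (norm_nonneg _) (pow_le_one₀ hu.1 hu.2)

lemma mom_tsum (w : ℝ → ℂ) (hw : IntervalIntegrable w volume 0 1) (k : ℕ × ℕ → ℂ)
    (e : ℕ × ℕ → ℕ) (hk : Summable fun p => ‖k p‖) :
    ∫ u in (0:ℝ)..1, (∑' p, k p * (w u * (u : ℂ) ^ e p)) =
      ∑' p, k p * ∫ u in (0:ℝ)..1, w u * (u : ℂ) ^ e p := by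
  have hi : ∀ p, Integrable (fun u : ℝ => k p * (w u * (u : ℂ) ^ e p))
      (volume.restrict (Set.Ioc 0 1)) := fun p =>
    ((intervalIntegrable_iff_integrableOn_Ioc_of_le zero_le_one).1 (mom_int w hw (e p))).const_mul _
  have h := hasSum_integral_of_summable_integral_norm hi ?_
  · rw [intervalIntegral.integral_of_le zero_le_one, ← h.tsum_eq]
    refine tsum_congr fun p => ?_
    rw [intervalIntegral.integral_of_le zero_le_one, integral_const_mul]
  · refine Summable.of_nonneg_of_le (fun p => integral_nonneg fun _ => norm_nonneg _) (fun p => ?_)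
      (hk.mul_right (∫ u in (0:ℝ)..1, ‖w u‖))
    simp_rw [norm_mul (k p)]
    rw [integral_const_mul, ← intervalIntegral.integral_of_le zero_le_one]
    exact mul_le_mul_of_nonneg_left (mom_norm w hw _) (norm_nonneg _)

lemma poch_gamma (z : ℂ) (hz : ∀ k : ℕ, z ≠ -k) (n : ℕ) :
    Complex.Gamma (z + n) = Complex.Gamma z * poch z n := by
  have h := Complex.Gamma_add_nat_div_Gamma_eq (n := n) z hz
  have : (ascPochhammer ℂ n).eval z = poch z n := by
    clear h
    induction n with
    | zero => simp [poch]
    | succ n ih => rw [ascPochhammer_succ_right]; simp [poch, Finset.prod_range_succ, ih]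
  rw [← this, ← h, mul_div_cancel₀ _ (Complex.Gamma_ne_zero hz)]

lemma beta_mom (b c : ℂ) (hb : 0 < b.re) (hbc : b.re < c.re) (n : ℕ) :
    ∫ u in (0:ℝ)..1, ((u : ℂ) ^ (b - 1) * (1 - (u : ℂ)) ^ (c - b - 1)) * (u : ℂ) ^ n =
      Complex.Gamma b * Complex.Gamma (c - b) / Complex.Gamma c * (poch b n / poch c n) := by
  have hne : ∀ z : ℂ, 0 < z.re → ∀ k : ℕ, z ≠ -k := by
    intro z hz k hk
    rw [hk] at hz
    simp at hz
    have : (0:ℝ) ≤ k := k.cast_nonneg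
    linarith
  have h := Complex.betaIntegral_eq_Gamma_mul_div (b + n) (c - b)
    (by simp; positivity) (by simpa using hbc)
  rw [show b + n + (c - b) = c + n by ring, poch_gamma b (hne b hb),
    poch_gamma c (hne c (hb.trans hbc))] at h
  have e : ∫ u in (0:ℝ)..1, ((u : ℂ) ^ (b - 1) * (1 - (u : ℂ)) ^ (c - b - 1)) * (u : ℂ) ^ n =
      Complex.betaIntegral (b + n) (c - b) := by
    rw [Complex.betaIntegral, intervalIntegral.integral_of_le zero_le_one,
      intervalIntegral.integral_of_le zero_le_one]
    refine setIntegral_congr_fun measurableSet_Ioc fun u hu => ?_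
    have hu0 : (u : ℂ) ≠ 0 := by exact_mod_cast hu.1.ne'
    rw [show b + n - 1 = (b - 1) + n by ring, Complex.cpow_add _ _ hu0, Complex.cpow_natCast]
    ring
  rw [e, h]
  simp only [div_eq_mul_inv, mul_inv]
  ring

theorem double_integral_appellF2 (a b b' c c' : ℂ) (x y : ℝ)
    (hb : 0 < b.re) (hbc : b.re < c.re) (hb' : 0 < b'.re) (hbc' : b'.re < c'.re)
    (hc : ∀ n : ℕ, c ≠ -(n : ℂ)) (hc' : ∀ n : ℕ, c' ≠ -(n : ℂ))
    (hxy : |x| + |y| < 1) :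
    ∫ u in (0:ℝ)..1, ∫ v in (0:ℝ)..1,
        (u : ℂ) ^ (b - 1) * (v : ℂ) ^ (b' - 1) * ((1 : ℂ) - u) ^ (c - b - 1) *
        ((1 : ℂ) - v) ^ (c' - b' - 1) * ((1 : ℂ) - u * x - v * y) ^ (-a) =
      Complex.Gamma b * Complex.Gamma b' * Complex.Gamma (c - b) *
        Complex.Gamma (c' - b') / (Complex.Gamma c * Complex.Gamma c') *
        appellF2 a b b' c c' x y := by
  have hw := Complex.betaIntegral_convergent hb (v := c - b) (by simpa using hbc)
  have hw' := Complex.betaIntegral_convergent hb' (v := c' - b') (by simpa using hbc')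
  set w : ℝ → ℂ := fun u => (u : ℂ) ^ (b - 1) * (1 - (u : ℂ)) ^ (c - b - 1) with hwd
  set w' : ℝ → ℂ := fun u => (u : ℂ) ^ (b' - 1) * (1 - (u : ℂ)) ^ (c' - b' - 1) with hwd'
  set g : ℕ × ℕ → ℂ := fun p =>
    poch a (p.1 + p.2) / (p.1.factorial * p.2.factorial) * (x : ℂ) ^ p.1 * (y : ℂ) ^ p.2 with hg
  have hgs : Summable fun p => ‖g p‖ := two_summable a x y (by simpa using hxy)
  set J : ℕ → ℂ := fun n => ∫ v in (0:ℝ)..1, w' v * (v : ℂ) ^ n with hJ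
  have hJs : Summable fun p : ℕ × ℕ => ‖g p * J p.2‖ := by
    refine Summable.of_nonneg_of_le (fun p => norm_nonneg _) (fun p => ?_)
      (hgs.mul_right (∫ u in (0:ℝ)..1, ‖w' u‖))
    rw [norm_mul]
    refine mul_le_mul_of_nonneg_left ?_ (norm_nonneg _)
    exact (intervalIntegral.norm_integral_le_integral_norm zero_le_one).trans (mom_norm w' hw' _)
  have inner : ∀ u ∈ Set.uIcc (0:ℝ) 1, (∫ v in (0:ℝ)..1,
        (u : ℂ) ^ (b - 1) * (v : ℂ) ^ (b' - 1) * ((1 : ℂ) - u) ^ (c - b - 1) *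
        ((1 : ℂ) - v) ^ (c' - b' - 1) * ((1 : ℂ) - u * x - v * y) ^ (-a)) =
      ∑' p : ℕ × ℕ, g p * J p.2 * (w u * (u : ℂ) ^ p.1) := by
    intro u hu
    rw [Set.uIcc_of_le zero_le_one] at hu
    have hk : Summable fun p : ℕ × ℕ => ‖g p * (w u * (u : ℂ) ^ p.1)‖ := by
      refine Summable.of_nonneg_of_le (fun p => norm_nonneg _) (fun p => ?_)
        (hgs.mul_right ‖w u‖)
      rw [norm_mul]
      refine mul_le_mul_of_nonneg_left ?_ (norm_nonneg _)
      rw [norm_mul, norm_pow, Complex.norm_real, Real.norm_of_nonneg hu.1]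
      exact mul_le_of_le_one_right (norm_nonneg _) (pow_le_one₀ hu.1 hu.2)
    have h := mom_tsum w' hw' (fun p : ℕ × ℕ => g p * (w u * (u : ℂ) ^ p.1)) (fun p => p.2) hk
    trans ∑' p : ℕ × ℕ, g p * (w u * (u : ℂ) ^ p.1) * J p.2
    · rw [← h]
      refine intervalIntegral.integral_congr fun v hv => ?_
      rw [Set.uIcc_of_le zero_le_one] at hv
      rw [two_tsum, ← tsum_mul_left]
      · refine tsum_congr fun p => ?_
        simp only [hg, hwd, hwd', mul_pow]
        ring
      · simp only [norm_mul, Complex.norm_real, Real.norm_eq_abs]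
        rw [abs_of_nonneg hu.1, abs_of_nonneg hv.1]
        have h1 := mul_le_of_le_one_left (abs_nonneg x) hu.2
        have h2 := mul_le_of_le_one_left (abs_nonneg y) hv.2
        linarith
    · exact tsum_congr fun p => by ring
  rw [intervalIntegral.integral_congr inner,
    mom_tsum w hw (fun p : ℕ × ℕ => g p * J p.2) (fun p => p.1) hJs, appellF2, ← tsum_mul_left]
  refine tsum_congr fun p => ?_
  simp only [hJ, hwd, hwd', hg]
  rw [beta_mom b c hb hbc, beta_mom b' c' hb' hbc']
  simp only [div_eq_mul_inv, mul_inv]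
  ring
end
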